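/- Uniform convergence of the bulk density: fix θ with −√2 < θ < √2 and R > 0. Then lim_{N→∞} sup_{|x| < R} | L^N(x/N + θ, x/N + θ) − √(2 − θ²)/π | = 0. -/

import Mathlib

open Real MeasureTheory Filter Set

/-- Physicists' Hermite polynomial `H_n(x) = (-1)^n e^{x^2} (d/dx)^n e^{-x^2}`. -/
noncomputable def hermiteP (n : ℕ) (x : ℝ) : ℝ :=
  (-1 : ℝ) ^ n * Real.exp (x ^ 2) * iteratedDeriv n (fun t => Real.exp (-t ^ 2)) x

/-- Oscillator wave function `ψ_n(x) = (√π 2^n n!)^{-1/2} e^{-x^2/2} H_n(x)`. -/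
noncomputable def osc (n : ℕ) (x : ℝ) : ℝ :=
  (Real.sqrt (Real.sqrt Real.pi * 2 ^ n * (n.factorial : ℝ)))⁻¹ *
    Real.exp (-x ^ 2 / 2) * hermiteP n x

/-- The kernel `K^N(x,y) = Σ_{k=0}^{N-1} ψ_k(x) ψ_k(y)`. -/
noncomputable def kerK (N : ℕ) (x y : ℝ) : ℝ :=
  ∑ k ∈ Finset.range N, osc k x * osc k y

/-- The rescaled kernel `L^N(x,y) = N^{-1/2} K^N(√N x, √N y)`. -/
noncomputable def kerL (N : ℕ) (x y : ℝ) : ℝ :=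
  (Real.sqrt (N : ℝ))⁻¹ * kerK N (Real.sqrt (N : ℝ) * x) (Real.sqrt (N : ℝ) * y)

/-!
The functions `ψ_N` and `ψ_{N-1}` solve a first-order linear system, and by Christoffel–Darboux
`K^N(x,x)` is a quadratic form in them which that system would conserve if its coefficients were
frozen at `x`. In the variable `y = x/√N` the system acquires the large factor `N`, so
`L^N(y,y)/√(2-y²)` is an adiabatic invariant: adding a correction of relative size `O(1/N)` leaves a
function whose logarithmic derivative is `O(1/N)` uniformly on compact subsets of `(-√2, √2)`. Hence
`L^N(y,y)/√(2-y²)` is asymptotically independent of `y`, and its limit is read off at `y = 0`, where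
`L^N(0,0)` is an elementary product evaluated by Wallis' formula.
-/

open scoped Topology

section Hermite

lemma hermiteP_zero (x : ℝ) : hermiteP 0 x = 1 := by
  simp [hermiteP, ← Real.exp_add]

lemma hasDerivAt_hermiteP_raising (n : ℕ) (x : ℝ) :
    HasDerivAt (hermiteP n) (2 * x * hermiteP n x - hermiteP (n + 1) x) x := by
  have hexp : HasDerivAt (fun t : ℝ => Real.exp (t ^ 2)) (Real.exp (x ^ 2) * (2 * x)) x := by
    simpa using (hasDerivAt_pow 2 x).exp
  have hgauss : HasDerivAt (iteratedDeriv n fun t : ℝ => Real.exp (-t ^ 2))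
      (iteratedDeriv (n + 1) (fun t : ℝ => Real.exp (-t ^ 2)) x) x := by
    have hsmooth : ContDiff ℝ ⊤ fun t : ℝ => Real.exp (-t ^ 2) := by fun_prop
    rw [iteratedDeriv_succ]
    exact (hsmooth.differentiable_iteratedDeriv n
      (by exact_mod_cast WithTop.coe_lt_top _) x).hasDerivAt
  refine ((hexp.const_mul ((-1 : ℝ) ^ n)).mul hgauss).congr_deriv ?_
  simp only [hermiteP, pow_succ]
  ring

-- The truncated `n - 1` is harmless here and below: its coefficient vanishes at `n = 0`.
lemma hasDerivAt_hermiteP_lowering (n : ℕ) (x : ℝ) :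
    HasDerivAt (hermiteP n) (2 * n * hermiteP (n - 1) x) x := by
  induction n generalizing x with
  | zero => simpa [funext hermiteP_zero] using hasDerivAt_const x (1 : ℝ)
  | succ n ih =>
    have hrec : hermiteP (n + 1) = fun y => 2 * y * hermiteP n y - 2 * n * hermiteP (n - 1) y := by
      funext y
      linarith [(hasDerivAt_hermiteP_raising n y).unique (ih y)]
    have hderiv := (((hasDerivAt_id' x).const_mul 2).mul (ih x)).sub
      ((hasDerivAt_hermiteP_raising (n - 1) x).const_mul (2 * (n : ℝ)))
    rw [hrec]
    refine hderiv.congr_deriv ?_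
    cases n with
    | zero => simp
    | succ n =>
      simp only [Nat.add_sub_cancel]
      push_cast
      ring

end Hermite

section Oscillator

/-- The constant that normalizes `ψ_n` in `L²(ℝ)`. -/
noncomputable def oscNorm (n : ℕ) : ℝ := (√(√π * 2 ^ n * n.factorial))⁻¹

lemma osc_eq_oscNorm_mul (n : ℕ) (x : ℝ) :
    osc n x = oscNorm n * Real.exp (-x ^ 2 / 2) * hermiteP n x := rfl

lemma sqrt_mul_oscNorm_succ (n : ℕ) : √(2 * (n + 1)) * oscNorm (n + 1) = oscNorm n := by
  have hsucc : √(√π * 2 ^ (n + 1) * (n + 1).factorial) =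
      √(2 * (n + 1)) * √(√π * 2 ^ n * n.factorial) := by
    rw [← Real.sqrt_mul (by positivity), Nat.factorial_succ]
    push_cast
    congr 1
    ring
  have hne : √(2 * ((n : ℝ) + 1)) ≠ 0 := by positivity
  rw [oscNorm, hsucc, mul_inv, mul_inv_cancel_left₀ hne, oscNorm]

lemma hasDerivAt_osc (n : ℕ) {x d : ℝ} (hd : HasDerivAt (hermiteP n) d x) :
    HasDerivAt (osc n) (oscNorm n * Real.exp (-x ^ 2 / 2) * (d - x * hermiteP n x)) x := by
  have hexp : HasDerivAt (fun t : ℝ => Real.exp (-t ^ 2 / 2)) (Real.exp (-x ^ 2 / 2) * (-x)) x := by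
    have hexponent : HasDerivAt (fun t : ℝ => -t ^ 2 / 2) (-x) x :=
      (((hasDerivAt_pow 2 x).fun_neg).div_const 2).congr_deriv (by norm_num; ring)
    exact hexponent.exp
  refine ((hexp.const_mul (oscNorm n)).mul hd).congr_deriv ?_
  ring

lemma hasDerivAt_osc_raising (n : ℕ) (x : ℝ) :
    HasDerivAt (osc n) (x * osc n x - √(2 * (n + 1)) * osc (n + 1) x) x := by
  refine (hasDerivAt_osc n (hasDerivAt_hermiteP_raising n x)).congr_deriv ?_
  rw [osc_eq_oscNorm_mul, osc_eq_oscNorm_mul, ← sqrt_mul_oscNorm_succ n]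
  ring

lemma hasDerivAt_osc_lowering (n : ℕ) (x : ℝ) :
    HasDerivAt (osc n) (√(2 * n) * osc (n - 1) x - x * osc n x) x := by
  refine (hasDerivAt_osc n (hasDerivAt_hermiteP_lowering n x)).congr_deriv ?_
  cases n with
  | zero =>
    simp only [osc_eq_oscNorm_mul, Nat.cast_zero, mul_zero, Real.sqrt_zero]
    ring
  | succ n =>
    have hsq : √(2 * ((n : ℝ) + 1)) ^ 2 = 2 * (n + 1) := Real.sq_sqrt (by positivity)
    simp only [osc_eq_oscNorm_mul, Nat.add_sub_cancel, ← sqrt_mul_oscNorm_succ n]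
    push_cast
    linear_combination
      (-oscNorm (n + 1) * Real.exp (-x ^ 2 / 2) * hermiteP n x) * hsq

lemma osc_three_term (n : ℕ) (x : ℝ) :
    √(2 * (n + 1)) * osc (n + 1) x + √(2 * n) * osc (n - 1) x = 2 * x * osc n x := by
  linarith [(hasDerivAt_osc_raising n x).unique (hasDerivAt_osc_lowering n x)]

lemma osc_zero_pos (x : ℝ) : 0 < osc 0 x := by
  have := Real.pi_pos
  rw [osc, hermiteP_zero]
  positivity

end Oscillator

section Kernel

lemma kerK_diag_eq_christoffel_darboux (N : ℕ) (x : ℝ) :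
    kerK N x x =
      N * (osc N x ^ 2 + osc (N - 1) x ^ 2) - √(2 * N) * x * osc N x * osc (N - 1) x := by
  induction N with
  | zero => simp [kerK]
  | succ N ih =>
    have hsum : kerK (N + 1) x x = kerK N x x + osc N x * osc N x := Finset.sum_range_succ ..
    have hsq : √(2 * (N : ℝ)) ^ 2 = 2 * N := Real.sq_sqrt (by positivity)
    have hsq' : √(2 * ((N : ℝ) + 1)) ^ 2 = 2 * (N + 1) := Real.sq_sqrt (by positivity)
    rw [hsum, ih]
    push_cast
    linear_combination (osc (N + 1) x ^ 2 / 2) * hsq' - (osc (N - 1) x ^ 2 / 2) * hsq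
      - ((√(2 * (N + 1)) * osc (N + 1) x - √(2 * N) * osc (N - 1) x) / 2) * osc_three_term N x

lemma kerK_diag_pos {N : ℕ} (hN : N ≠ 0) (x : ℝ) : 0 < kerK N x x :=
  Finset.sum_pos' (fun _ _ => mul_self_nonneg _)
    ⟨0, Finset.mem_range.2 (Nat.pos_of_ne_zero hN), mul_pos (osc_zero_pos x) (osc_zero_pos x)⟩

lemma kerL_diag_pos {N : ℕ} (hN : N ≠ 0) (y : ℝ) : 0 < kerL N y y :=
  mul_pos (by positivity) (kerK_diag_pos hN _)

end Kernel

lemma abs_log_sub_log_le_of_abs_sub_le {x z δ : ℝ} (hx : 0 < x) (hδ : δ ≤ 1 / 2)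
    (h : |z - x| ≤ δ * x) : |Real.log z - Real.log x| ≤ 2 * δ := by
  obtain ⟨hlower, hupper⟩ := abs_le.1 h
  have hδ0 : 0 ≤ δ := nonneg_of_mul_nonneg_left ((abs_nonneg _).trans h) hx
  have hz : x / 2 ≤ z := by nlinarith
  have hz0 : 0 < z := by linarith
  rw [← Real.log_div hz0.ne' hx.ne', abs_le]
  constructor
  · have hlog := Real.one_sub_inv_le_log_of_pos (div_pos hz0 hx)
    have hinv : (z / x)⁻¹ - 1 ≤ 2 * δ := by
      rw [inv_div, div_sub_one hz0.ne', div_le_iff₀ hz0]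
      nlinarith
    linarith
  · have hlog := Real.log_le_sub_one_of_pos (div_pos hz0 hx)
    have hratio : z / x - 1 ≤ δ := by
      rw [div_sub_one hx.ne', div_le_iff₀ hx]
      exact hupper
    linarith

section LadderPair

/-- The adiabatic form, with large parameter `lam`, of the ladder relations between two consecutive
oscillator functions: a first-order linear system that oscillates for `|y| < s`. -/
structure IsLadderPair (lam s : ℝ) (a b : ℝ → ℝ) : Prop where
  hasDerivAt_fst (y : ℝ) : HasDerivAt a (lam * (s * b y - y * a y)) y
  hasDerivAt_snd (y : ℝ) : HasDerivAt b (lam * (y * b y - s * a y)) y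

/-- The quadratic form in a ladder pair that the system would conserve if its coefficients were
frozen at `y`. -/
def ladderEnergy (s : ℝ) (a b : ℝ → ℝ) (y : ℝ) : ℝ :=
  s * (a y ^ 2 + b y ^ 2) - 2 * y * a y * b y

/-- The adiabatic invariant of a ladder pair: energy over local frequency, up to the factor `lam`.
It is meaningful only for `|y| < s`. -/
noncomputable def ladderAction (s : ℝ) (a b : ℝ → ℝ) (y : ℝ) : ℝ :=
  ladderEnergy s a b y / √(s ^ 2 - y ^ 2)

/-- The adiabatic invariant of a ladder pair corrected to first order in `1 / lam`; the correction
cancels the leading oscillating term of the derivative of `ladderAction`. -/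
noncomputable def correctedAction (lam s : ℝ) (a b : ℝ → ℝ) (y : ℝ) : ℝ :=
  ladderAction s a b y + s / (2 * lam * √(s ^ 2 - y ^ 2) ^ 3) * (a y ^ 2 - b y ^ 2)

variable {lam s ρ y : ℝ} {a b : ℝ → ℝ}

lemma ladderEnergy_sq :
    ladderEnergy s a b y ^ 2 = (s ^ 2 - y ^ 2) * (a y ^ 2 - b y ^ 2) ^ 2 +
      (2 * s * a y * b y - y * (a y ^ 2 + b y ^ 2)) ^ 2 := by
  rw [ladderEnergy]
  ring

lemma abs_sq_sub_sq_le_abs_ladderAction (hy : 0 < s ^ 2 - y ^ 2) :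
    |a y ^ 2 - b y ^ 2| ≤ |ladderAction s a b y| := by
  rw [← sq_le_sq, ladderAction, div_pow, Real.sq_sqrt hy.le, le_div_iff₀ hy, ladderEnergy_sq]
  nlinarith [sq_nonneg (2 * s * a y * b y - y * (a y ^ 2 + b y ^ 2))]

lemma IsLadderPair.hasDerivAt_ladderEnergy (h : IsLadderPair lam s a b) (y : ℝ) :
    HasDerivAt (ladderEnergy s a b) (-2 * a y * b y) y := by
  have ha := h.hasDerivAt_fst y
  have hb := h.hasDerivAt_snd y
  refine ((((ha.fun_pow 2).add (hb.fun_pow 2)).const_mul s).sub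
    ((((hasDerivAt_id' y).const_mul 2).fun_mul ha).fun_mul hb)).congr_deriv ?_
  push_cast
  ring

lemma hasDerivAt_sqrt_sq_sub_sq (hy : 0 < s ^ 2 - y ^ 2) :
    HasDerivAt (fun x => √(s ^ 2 - x ^ 2)) (-y / √(s ^ 2 - y ^ 2)) y := by
  have hsub : HasDerivAt (fun x : ℝ => s ^ 2 - x ^ 2) (-(2 * y)) y := by
    simpa using (hasDerivAt_pow 2 y).const_sub (s ^ 2)
  refine (hsub.sqrt hy.ne').congr_deriv ?_
  field_simp

lemma IsLadderPair.hasDerivAt_ladderAction (h : IsLadderPair lam s a b)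
    (hy : 0 < s ^ 2 - y ^ 2) :
    HasDerivAt (ladderAction s a b)
      (s * (y * (a y ^ 2 + b y ^ 2) - 2 * s * a y * b y) / √(s ^ 2 - y ^ 2) ^ 3) y := by
  have hfreq : 0 < √(s ^ 2 - y ^ 2) := Real.sqrt_pos.2 hy
  have hsq : √(s ^ 2 - y ^ 2) ^ 2 = s ^ 2 - y ^ 2 := Real.sq_sqrt hy.le
  refine ((h.hasDerivAt_ladderEnergy y).div (hasDerivAt_sqrt_sq_sub_sq hy) hfreq.ne').congr_deriv ?_
  rw [ladderEnergy]
  field_simp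
  linear_combination (-2 * a y * b y) * hsq

lemma IsLadderPair.hasDerivAt_sq_sub_sq (h : IsLadderPair lam s a b) (y : ℝ) :
    HasDerivAt (fun x => a x ^ 2 - b x ^ 2)
      (-2 * lam * (y * (a y ^ 2 + b y ^ 2) - 2 * s * a y * b y)) y := by
  refine (((h.hasDerivAt_fst y).fun_pow 2).fun_sub
    ((h.hasDerivAt_snd y).fun_pow 2)).congr_deriv ?_
  push_cast
  ring

lemma IsLadderPair.hasDerivAt_correctedAction (h : IsLadderPair lam s a b) (hlam : lam ≠ 0)
    (hy : 0 < s ^ 2 - y ^ 2) :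
    HasDerivAt (correctedAction lam s a b)
      (3 * s * y / (2 * lam * √(s ^ 2 - y ^ 2) ^ 5) * (a y ^ 2 - b y ^ 2)) y := by
  have hcoeff := (hasDerivAt_const y s).fun_div
    (((hasDerivAt_sqrt_sq_sub_sq hy).fun_pow 3).const_mul (2 * lam)) (by positivity)
  refine ((h.hasDerivAt_ladderAction hy).add
    (hcoeff.mul (h.hasDerivAt_sq_sub_sq y))).congr_deriv ?_
  push_cast
  field_simp
  ring

lemma sqrt_sq_sub_sq_le (hy : |y| ≤ ρ) : √(s ^ 2 - ρ ^ 2) ≤ √(s ^ 2 - y ^ 2) :=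
  Real.sqrt_le_sqrt (sub_le_sub_left (sq_le_sq' (abs_le.1 hy).1 (abs_le.1 hy).2) _)

lemma sq_sub_sq_pos_of_abs_le (hρ : 0 < s ^ 2 - ρ ^ 2) (hy : |y| ≤ ρ) : 0 < s ^ 2 - y ^ 2 :=
  Real.sqrt_pos.1 ((Real.sqrt_pos.2 hρ).trans_le (sqrt_sq_sub_sq_le hy))

lemma abs_correctedAction_sub_ladderAction_le (hlam : 0 < lam) (hs : 0 ≤ s)
    (hρ : 0 < s ^ 2 - ρ ^ 2) (hy : |y| ≤ ρ) :
    |correctedAction lam s a b y - ladderAction s a b y| ≤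
      s / (2 * lam * √(s ^ 2 - ρ ^ 2) ^ 3) * |ladderAction s a b y| := by
  have hy0 := sq_sub_sq_pos_of_abs_le hρ hy
  have hle := sqrt_sq_sub_sq_le (s := s) hy
  rw [correctedAction, add_sub_cancel_left, abs_mul, abs_of_nonneg (by positivity)]
  exact mul_le_mul (by gcongr) (abs_sq_sub_sq_le_abs_ladderAction hy0) (abs_nonneg _)
    (by positivity)

lemma correction_coeff_le_half (hlam : 0 < lam) (hρ : 0 < s ^ 2 - ρ ^ 2)
    (hlarge : s ≤ lam * √(s ^ 2 - ρ ^ 2) ^ 3) :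
    s / (2 * lam * √(s ^ 2 - ρ ^ 2) ^ 3) ≤ 1 / 2 := by
  rw [div_le_div_iff₀ (by positivity) two_pos]
  linarith

lemma half_ladderAction_le_correctedAction (hlam : 0 < lam) (hs : 0 ≤ s)
    (hρ : 0 < s ^ 2 - ρ ^ 2) (hlarge : s ≤ lam * √(s ^ 2 - ρ ^ 2) ^ 3) (hy : |y| ≤ ρ)
    (hpos : 0 < ladderAction s a b y) :
    ladderAction s a b y / 2 ≤ correctedAction lam s a b y := by
  have hclose := abs_correctedAction_sub_ladderAction_le (a := a) (b := b) hlam hs hρ hy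
  have hcoeff := correction_coeff_le_half hlam hρ hlarge
  rw [abs_of_pos hpos] at hclose
  nlinarith [(abs_le.1 hclose).1]

lemma abs_log_correctedAction_sub_log_ladderAction_le (hlam : 0 < lam) (hs : 0 ≤ s)
    (hρ : 0 < s ^ 2 - ρ ^ 2) (hlarge : s ≤ lam * √(s ^ 2 - ρ ^ 2) ^ 3) (hy : |y| ≤ ρ)
    (hpos : 0 < ladderAction s a b y) :
    |Real.log (correctedAction lam s a b y) - Real.log (ladderAction s a b y)| ≤
      s / (lam * √(s ^ 2 - ρ ^ 2) ^ 3) := by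
  have hclose := abs_correctedAction_sub_ladderAction_le (a := a) (b := b) hlam hs hρ hy
  rw [abs_of_pos hpos] at hclose
  refine (abs_log_sub_log_le_of_abs_sub_le hpos
    (correction_coeff_le_half hlam hρ hlarge) hclose).trans_eq ?_
  field_simp

lemma abs_logDeriv_correctedAction_le (hlam : 0 < lam) (hs : 0 ≤ s) (hρ : 0 < s ^ 2 - ρ ^ 2)
    (hlarge : s ≤ lam * √(s ^ 2 - ρ ^ 2) ^ 3) (hy : |y| ≤ ρ) (hpos : 0 < ladderAction s a b y) :
    |3 * s * y / (2 * lam * √(s ^ 2 - y ^ 2) ^ 5) * (a y ^ 2 - b y ^ 2) /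
      correctedAction lam s a b y| ≤ 3 * s * ρ / (lam * √(s ^ 2 - ρ ^ 2) ^ 5) := by
  have hρ0 : 0 ≤ ρ := (abs_nonneg y).trans hy
  have hfreq := sqrt_sq_sub_sq_le (s := s) hy
  have hhalf := half_ladderAction_le_correctedAction hlam hs hρ hlarge hy hpos
  have hJpos : 0 < correctedAction lam s a b y := (half_pos hpos).trans_le hhalf
  have hdiff := abs_sq_sub_sq_le_abs_ladderAction (a := a) (b := b)
    (sq_sub_sq_pos_of_abs_le hρ hy)
  rw [abs_of_pos hpos] at hdiff
  have hcoeff : |3 * s * y / (2 * lam * √(s ^ 2 - y ^ 2) ^ 5)| ≤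
      3 * s * ρ / (2 * lam * √(s ^ 2 - ρ ^ 2) ^ 5) := by
    rw [abs_div, abs_mul, abs_of_nonneg (by positivity : 0 ≤ 3 * s),
      abs_of_nonneg (by positivity : 0 ≤ 2 * lam * √(s ^ 2 - y ^ 2) ^ 5)]
    gcongr
  rw [abs_div, abs_mul, abs_of_pos hJpos, div_le_iff₀ hJpos]
  calc _ ≤ 3 * s * ρ / (2 * lam * √(s ^ 2 - ρ ^ 2) ^ 5) * (2 * correctedAction lam s a b y) :=
        mul_le_mul hcoeff (by linarith) (abs_nonneg _) (by positivity)
    _ = 3 * s * ρ / (lam * √(s ^ 2 - ρ ^ 2) ^ 5) * correctedAction lam s a b y := by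
        field_simp

lemma IsLadderPair.abs_log_correctedAction_sub_log_correctedAction_zero_le
    (h : IsLadderPair lam s a b) (hlam : 0 < lam) (hs : 0 ≤ s) (hρ : 0 < s ^ 2 - ρ ^ 2)
    (hlarge : s ≤ lam * √(s ^ 2 - ρ ^ 2) ^ 3) (hpos : ∀ x, |x| ≤ ρ → 0 < ladderAction s a b x)
    (hy : |y| ≤ ρ) :
    |Real.log (correctedAction lam s a b y) - Real.log (correctedAction lam s a b 0)| ≤
      3 * s * ρ ^ 2 / (lam * √(s ^ 2 - ρ ^ 2) ^ 5) := by
  have hρ0 : 0 ≤ ρ := (abs_nonneg y).trans hy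
  have hJpos : ∀ x, |x| ≤ ρ → 0 < correctedAction lam s a b x := fun x hx =>
    (half_pos (hpos x hx)).trans_le
      (half_ladderAction_le_correctedAction hlam hs hρ hlarge hx (hpos x hx))
  have hmvt := (convex_Icc (-ρ) ρ).norm_image_sub_le_of_norm_hasDerivWithin_le (x := 0)
    (fun x hx => ((h.hasDerivAt_correctedAction hlam.ne'
      (sq_sub_sq_pos_of_abs_le hρ (abs_le.2 hx))).log
        (hJpos x (abs_le.2 hx)).ne').hasDerivWithinAt)
    (fun x hx => abs_logDeriv_correctedAction_le hlam hs hρ hlarge (abs_le.2 hx)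
      (hpos x (abs_le.2 hx)))
    (abs_le.1 (by simpa using hρ0)) (abs_le.1 hy)
  calc _ ≤ 3 * s * ρ / (lam * √(s ^ 2 - ρ ^ 2) ^ 5) * |y| := by simpa using hmvt
    _ ≤ 3 * s * ρ / (lam * √(s ^ 2 - ρ ^ 2) ^ 5) * ρ := by gcongr
    _ = 3 * s * ρ ^ 2 / (lam * √(s ^ 2 - ρ ^ 2) ^ 5) := by ring

theorem IsLadderPair.abs_log_ladderAction_sub_log_ladderAction_zero_le
    (h : IsLadderPair lam s a b) (hlam : 0 < lam) (hs : 0 ≤ s) (hρ : 0 < s ^ 2 - ρ ^ 2)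
    (hlarge : s ≤ lam * √(s ^ 2 - ρ ^ 2) ^ 3) (hpos : ∀ x, |x| ≤ ρ → 0 < ladderAction s a b x)
    (hy : |y| ≤ ρ) :
    |Real.log (ladderAction s a b y) - Real.log (ladderAction s a b 0)| ≤
      (2 * s / √(s ^ 2 - ρ ^ 2) ^ 3 + 3 * s * ρ ^ 2 / √(s ^ 2 - ρ ^ 2) ^ 5) / lam := by
  have hzero : |(0 : ℝ)| ≤ ρ := by simpa using (abs_nonneg y).trans hy
  have hcorr_y := abs_le.1 <|
    abs_log_correctedAction_sub_log_ladderAction_le hlam hs hρ hlarge hy (hpos y hy)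
  have hcorr_zero := abs_le.1 <|
    abs_log_correctedAction_sub_log_ladderAction_le hlam hs hρ hlarge hzero (hpos 0 hzero)
  have hvar := abs_le.1 <|
    h.abs_log_correctedAction_sub_log_correctedAction_zero_le hlam hs hρ hlarge hpos hy
  have hsum : (2 * s / √(s ^ 2 - ρ ^ 2) ^ 3 + 3 * s * ρ ^ 2 / √(s ^ 2 - ρ ^ 2) ^ 5) / lam =
      2 * (s / (lam * √(s ^ 2 - ρ ^ 2) ^ 3)) + 3 * s * ρ ^ 2 / (lam * √(s ^ 2 - ρ ^ 2) ^ 5) := by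
    field_simp
  rw [hsum, abs_le]
  constructor <;> linarith

end LadderPair

section ScaledKernel

/-- The oscillator function `ψ_k` in the variable `y = x / √N`, in which the bulk of the spectrum
is the fixed interval `|y| < √2`. -/
noncomputable def scaledOsc (N k : ℕ) (y : ℝ) : ℝ := osc k (√N * y)

lemma isLadderPair_scaledOsc {N : ℕ} (hN : N ≠ 0) :
    IsLadderPair N √2 (scaledOsc N N) (scaledOsc N (N - 1)) := by
  obtain ⟨n, rfl⟩ := Nat.exists_eq_add_one_of_ne_zero hN
  have hsplit : √(2 * ((n : ℝ) + 1)) = √2 * √(n + 1) := Real.sqrt_mul zero_le_two _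
  have hsq : √((n : ℝ) + 1) ^ 2 = n + 1 := Real.sq_sqrt (by positivity)
  constructor <;> intro y
  · have hscale := (hasDerivAt_id' y).const_mul √((n + 1 : ℕ) : ℝ)
    refine ((hasDerivAt_osc_lowering (n + 1) _).comp y hscale).congr_deriv ?_
    simp only [scaledOsc, Nat.add_sub_cancel, Nat.cast_add, Nat.cast_one, hsplit]
    linear_combination (√2 * osc n (√(n + 1) * y) - y * osc (n + 1) (√(n + 1) * y)) * hsq
  · have hscale := (hasDerivAt_id' y).const_mul √((n + 1 : ℕ) : ℝ)
    refine ((hasDerivAt_osc_raising n _).comp y hscale).congr_deriv ?_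
    simp only [scaledOsc, Nat.add_sub_cancel, Nat.cast_add, Nat.cast_one, hsplit]
    linear_combination (y * osc n (√(n + 1) * y) - √2 * osc (n + 1) (√(n + 1) * y)) * hsq

lemma kerL_diag_eq_ladderEnergy (N : ℕ) (y : ℝ) :
    kerL N y y = √N / √2 * ladderEnergy √2 (scaledOsc N N) (scaledOsc N (N - 1)) y := by
  rcases eq_or_ne N 0 with rfl | hN
  · simp [kerL]
  have hsplit : √(2 * (N : ℝ)) = √2 * √N := Real.sqrt_mul zero_le_two _
  have hsq : √(N : ℝ) ^ 2 = N := Real.sq_sqrt N.cast_nonneg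
  have hsq_two : √(2 : ℝ) ^ 2 = 2 := Real.sq_sqrt zero_le_two
  have hne : √(N : ℝ) ≠ 0 := by positivity
  rw [kerL, kerK_diag_eq_christoffel_darboux, ladderEnergy, hsplit]
  simp only [scaledOsc]
  rw [inv_mul_eq_div, div_mul_eq_mul_div, div_eq_div_iff hne (by positivity)]
  linear_combination
    (-√2 * (osc N (√N * y) ^ 2 + osc (N - 1) (√N * y) ^ 2)) * hsq -
      √N ^ 2 * y * osc N (√N * y) * osc (N - 1) (√N * y) * hsq_two

lemma kerL_diag_div_sqrt (N : ℕ) (y : ℝ) :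
    kerL N y y / √(2 - y ^ 2) =
      √N / √2 * ladderAction √2 (scaledOsc N N) (scaledOsc N (N - 1)) y := by
  rw [kerL_diag_eq_ladderEnergy, ladderAction, Real.sq_sqrt zero_le_two, mul_div_assoc]

lemma ladderAction_scaledOsc_pos {N : ℕ} (hN : N ≠ 0) {y : ℝ} (hy : 0 < 2 - y ^ 2) :
    0 < ladderAction √2 (scaledOsc N N) (scaledOsc N (N - 1)) y := by
  have hkerL : 0 < kerL N y y / √(2 - y ^ 2) :=
    div_pos (kerL_diag_pos hN y) (Real.sqrt_pos.2 hy)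
  rw [kerL_diag_div_sqrt] at hkerL
  exact pos_of_mul_pos_right hkerL (by positivity)

lemma log_kerL_diag_div_sqrt {N : ℕ} (hN : N ≠ 0) {y : ℝ} (hy : 0 < 2 - y ^ 2) :
    Real.log (kerL N y y / √(2 - y ^ 2)) = Real.log (√N / √2) +
      Real.log (ladderAction √2 (scaledOsc N N) (scaledOsc N (N - 1)) y) := by
  rw [kerL_diag_div_sqrt, Real.log_mul (by positivity) (ladderAction_scaledOsc_pos hN hy).ne']

theorem abs_log_kerL_diag_sub_log_kerL_diag_zero_le {N : ℕ} (hN : N ≠ 0) {ρ y : ℝ}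
    (hρ : 0 < 2 - ρ ^ 2) (hlarge : √2 ≤ N * √(2 - ρ ^ 2) ^ 3) (hy : |y| ≤ ρ) :
    |Real.log (kerL N y y / √(2 - y ^ 2)) - Real.log (kerL N 0 0 / √2)| ≤
      (2 * √2 / √(2 - ρ ^ 2) ^ 3 + 3 * √2 * ρ ^ 2 / √(2 - ρ ^ 2) ^ 5) / N := by
  have hsq_two : √(2 : ℝ) ^ 2 = 2 := Real.sq_sqrt zero_le_two
  have hbulk : ∀ x : ℝ, |x| ≤ ρ → 0 < 2 - x ^ 2 := fun x hx => by
    rw [← hsq_two] at hρ ⊢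
    exact sq_sub_sq_pos_of_abs_le hρ hx
  have hvar := (isLadderPair_scaledOsc hN).abs_log_ladderAction_sub_log_ladderAction_zero_le
    (ρ := ρ) (by positivity) (Real.sqrt_nonneg 2) (by rwa [hsq_two]) (by rwa [hsq_two])
    (fun x hx => ladderAction_scaledOsc_pos hN (hbulk x hx)) hy
  have hzero := log_kerL_diag_div_sqrt hN (y := 0) (by norm_num)
  rw [zero_pow two_ne_zero, sub_zero] at hzero
  rw [hsq_two] at hvar
  rwa [log_kerL_diag_div_sqrt hN (hbulk y hy), hzero, add_sub_add_left_eq_sub]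

end ScaledKernel

section Origin

lemma add_two_mul_osc_add_two_apply_zero_sq (k : ℕ) :
    ((k : ℝ) + 2) * osc (k + 2) 0 ^ 2 = (k + 1) * osc k 0 ^ 2 := by
  have hrec := osc_three_term (k + 1) 0
  have hsq : √(2 * ((k : ℝ) + 1)) ^ 2 = 2 * (k + 1) := Real.sq_sqrt (by positivity)
  have hsq' : √(2 * ((k : ℝ) + 1 + 1)) ^ 2 = 2 * (k + 1 + 1) := Real.sq_sqrt (by positivity)
  push_cast at hrec
  simp only [mul_zero, zero_mul, add_assoc k 1 1, Nat.reduceAdd] at hrec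
  linear_combination (-(osc (k + 2) 0 ^ 2) / 2) * hsq' + (osc k 0 ^ 2 / 2) * hsq +
    ((√(2 * (k + 1 + 1)) * osc (k + 2) 0 - √(2 * (k + 1)) * osc k 0) / 2) * hrec

lemma osc_odd_apply_zero (m : ℕ) : osc (2 * m + 1) 0 = 0 := by
  induction m with
  | zero => simpa using osc_three_term 0 0
  | succ m ih =>
    have hrec := add_two_mul_osc_add_two_apply_zero_sq (2 * m + 1)
    rw [ih, zero_pow two_ne_zero, mul_zero] at hrec
    exact pow_eq_zero_iff two_ne_zero |>.1 ((mul_eq_zero.1 hrec).resolve_left (by positivity))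

lemma osc_even_apply_zero_pow_four (m : ℕ) :
    osc (2 * m) 0 ^ 4 * ((2 * m + 1) * (π * Real.Wallis.W m)) = 1 := by
  induction m with
  | zero =>
    have hpi := Real.pi_pos
    have hsqrt : √(√π) ^ 4 = π := by
      rw [show 4 = 2 * 2 from rfl, pow_mul, Real.sq_sqrt (Real.sqrt_nonneg _), Real.sq_sqrt hpi.le]
    simp [osc, hermiteP_zero, Real.Wallis.W, hsqrt, hpi.ne']
  | succ m ih =>
    have hrec := add_two_mul_osc_add_two_apply_zero_sq (2 * m)
    push_cast at hrec
    have hosc : osc (2 * (m + 1)) 0 ^ 2 = (2 * m + 1) * osc (2 * m) 0 ^ 2 / (2 * m + 2) := by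
      rw [← hrec, mul_add_one]
      field_simp
    refine Eq.trans ?_ ih
    rw [Real.Wallis.W_succ, show 4 = 2 * 2 from rfl, pow_mul, hosc]
    push_cast
    field_simp
    ring

lemma kerL_diag_zero_eq_sqrt_mul_osc_sq (N : ℕ) :
    kerL N 0 0 = √N * osc (2 * (N / 2)) 0 ^ 2 := by
  have hdiag : kerL N 0 0 = √N * (osc N 0 ^ 2 + osc (N - 1) 0 ^ 2) := by
    rw [kerL, mul_zero, kerK_diag_eq_christoffel_darboux, mul_zero, zero_mul, zero_mul, sub_zero,
      ← mul_assoc, inv_mul_eq_div, Real.div_sqrt]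
  rw [hdiag]
  obtain ⟨m, rfl | rfl⟩ := N.even_or_odd'
  · rcases m.eq_zero_or_eq_succ_pred with rfl | hm
    · simp
    · have hpred : osc (2 * m - 1) 0 = 0 := by
        rw [show 2 * m - 1 = 2 * (m - 1) + 1 by lia, osc_odd_apply_zero]
      rw [hpred, Nat.mul_div_cancel_left m two_pos]
      ring
  · rw [osc_odd_apply_zero, Nat.add_sub_cancel, show (2 * m + 1) / 2 = m by lia]
    ring

lemma kerL_diag_zero_sq (N : ℕ) :
    kerL N 0 0 ^ 2 = N / ((2 * (N / 2 : ℕ) + 1) * (π * Real.Wallis.W (N / 2))) := by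
  have hne : (2 * ((N / 2 : ℕ) : ℝ) + 1) * (π * Real.Wallis.W (N / 2)) ≠ 0 := by
    have := Real.pi_pos
    have := Real.Wallis.W_pos (N / 2)
    positivity
  rw [eq_div_iff hne, kerL_diag_zero_eq_sqrt_mul_osc_sq, mul_pow, Real.sq_sqrt N.cast_nonneg]
  linear_combination (N : ℝ) * osc_even_apply_zero_pow_four (N / 2)

lemma tendsto_div_two_mul_half_add_one :
    Tendsto (fun N : ℕ => (N : ℝ) / (2 * (N / 2 : ℕ) + 1)) atTop (𝓝 1) := by
  refine tendsto_of_tendsto_of_tendsto_of_le_of_le (tendsto_natCast_div_add_atTop (1 : ℝ))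
    tendsto_const_nhds (fun N => ?_) (fun N => ?_)
  · have hle : 2 * ((N / 2 : ℕ) : ℝ) ≤ N := by exact_mod_cast Nat.mul_div_le N 2
    dsimp only
    gcongr
  · have hle : (N : ℝ) ≤ 2 * (N / 2 : ℕ) + 1 := by
      exact_mod_cast (by omega : N ≤ 2 * (N / 2) + 1)
    exact div_le_one_of_le₀ hle (by positivity)

lemma tendsto_kerL_diag_zero : Tendsto (fun N => kerL N 0 0) atTop (𝓝 (√2 / π)) := by
  have hwallis : Tendsto (fun N : ℕ => Real.Wallis.W (N / 2)) atTop (𝓝 (π / 2)) :=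
    Real.Wallis.tendsto_W_nhds_pi_div_two.comp (Nat.tendsto_div_const_atTop two_ne_zero)
  have hsq : Tendsto (fun N => kerL N 0 0 ^ 2) atTop (𝓝 ((√2 / π) ^ 2)) := by
    have hlim := tendsto_div_two_mul_half_add_one.div (hwallis.const_mul π) (by positivity)
    convert hlim using 2 with N
    · rw [kerL_diag_zero_sq, ← div_div]
      rfl
    · rw [div_pow, Real.sq_sqrt zero_le_two]
      field_simp
  have hnonneg (N : ℕ) : 0 ≤ kerL N 0 0 := by
    rw [kerL_diag_zero_eq_sqrt_mul_osc_sq]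
    positivity
  simpa only [Real.sqrt_sq (hnonneg _), Real.sqrt_sq (show 0 ≤ √2 / π by positivity)] using hsq.sqrt

end Origin

section Bulk

lemma tendsto_kerL_diag_div_kerL_diag_zero {θ : ℝ} (hθ : |θ| < √2) :
    Tendsto (fun p : ℕ × ℝ => kerL p.1 p.2 p.2 / √(2 - p.2 ^ 2) / (kerL p.1 0 0 / √2))
      (atTop ×ˢ 𝓝 θ) (𝓝 1) := by
  obtain ⟨ρ, hθρ, hρ⟩ := exists_between hθ
  have hρ0 : 0 ≤ ρ := (abs_nonneg θ).trans hθρ.le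
  have hbulk : 0 < 2 - ρ ^ 2 := sub_pos.2 ((Real.lt_sqrt hρ0).1 hρ)
  have hnat : Tendsto (fun p : ℕ × ℝ => (p.1 : ℝ)) (atTop ×ˢ 𝓝 θ) atTop :=
    tendsto_natCast_atTop_atTop.comp tendsto_fst
  have hlarge : ∀ᶠ p : ℕ × ℝ in atTop ×ˢ 𝓝 θ, √2 ≤ p.1 * √(2 - ρ ^ 2) ^ 3 :=
    (hnat.atTop_mul_const (by positivity)).eventually_ge_atTop _
  have hne : ∀ᶠ p : ℕ × ℝ in atTop ×ˢ 𝓝 θ, p.1 ≠ 0 :=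
    tendsto_fst.eventually (eventually_ne_atTop 0)
  have hnear : ∀ᶠ p : ℕ × ℝ in atTop ×ˢ 𝓝 θ, |p.2| < ρ :=
    tendsto_snd.eventually (continuous_abs.continuousAt.eventually_lt_const hθρ)
  have hlog : Tendsto (fun p : ℕ × ℝ =>
      Real.log (kerL p.1 p.2 p.2 / √(2 - p.2 ^ 2)) - Real.log (kerL p.1 0 0 / √2))
      (atTop ×ˢ 𝓝 θ) (𝓝 0) := by
    refine squeeze_zero_norm' ?_ (hnat.const_div_atTop
      (2 * √2 / √(2 - ρ ^ 2) ^ 3 + 3 * √2 * ρ ^ 2 / √(2 - ρ ^ 2) ^ 5))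
    filter_upwards [hlarge, hne, hnear] with p hp_large hp_ne hp_near
    exact abs_log_kerL_diag_sub_log_kerL_diag_zero_le hp_ne hbulk hp_large hp_near.le
  rw [← Real.exp_zero]
  refine ((Real.continuous_exp.tendsto 0).comp hlog).congr' ?_
  filter_upwards [hne, hnear] with p hp_ne hp_near
  have hp_bulk : 0 < 2 - p.2 ^ 2 :=
    hbulk.trans (sub_lt_sub_left (sq_lt_sq' (abs_lt.1 hp_near).1 (abs_lt.1 hp_near).2) 2)
  have hy := kerL_diag_pos hp_ne p.2
  have hzero := kerL_diag_pos hp_ne 0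
  rw [Function.comp_apply, Real.exp_sub, Real.exp_log (by positivity), Real.exp_log (by positivity)]

theorem tendsto_kerL_diag {θ : ℝ} (hθ : |θ| < √2) :
    Tendsto (fun p : ℕ × ℝ => kerL p.1 p.2 p.2) (atTop ×ˢ 𝓝 θ) (𝓝 (√(2 - θ ^ 2) / π)) := by
  have hfreq : Tendsto (fun p : ℕ × ℝ => √(2 - p.2 ^ 2)) (atTop ×ˢ 𝓝 θ) (𝓝 √(2 - θ ^ 2)) :=
    (Continuous.tendsto (by fun_prop : Continuous fun y : ℝ => √(2 - y ^ 2)) θ).comp tendsto_snd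
  have hzero : Tendsto (fun p : ℕ × ℝ => kerL p.1 0 0 / √2) (atTop ×ˢ 𝓝 θ) (𝓝 (√2 / π / √2)) :=
    (tendsto_kerL_diag_zero.comp tendsto_fst).div_const _
  have hlim := (hfreq.mul (tendsto_kerL_diag_div_kerL_diag_zero hθ)).mul hzero
  have hlimit : √(2 - θ ^ 2) * 1 * (√2 / π / √2) = √(2 - θ ^ 2) / π := by field_simp
  rw [hlimit] at hlim
  refine hlim.congr' ?_
  have hθ_bulk : θ ^ 2 < 2 := by simpa using (Real.lt_sqrt (abs_nonneg θ)).1 hθ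
  filter_upwards [tendsto_fst.eventually (eventually_ne_atTop 0),
    tendsto_snd.eventually ((continuous_pow 2).continuousAt.eventually_lt_const hθ_bulk)]
    with p hp_ne hp_bulk
  have := kerL_diag_pos hp_ne 0
  have : 0 < √(2 - p.2 ^ 2) := Real.sqrt_pos.2 (sub_pos.2 hp_bulk)
  field_simp

lemma tendsto_prodMk_div_natCast_add (θ R : ℝ) :
    Tendsto (fun p : ℕ × ℝ => (p.1, p.2 / p.1 + θ)) (atTop ×ˢ 𝓟 {x | |x| < R})
      (atTop ×ˢ 𝓝 θ) := by
  have hnat : Tendsto (fun p : ℕ × ℝ => (p.1 : ℝ)) (atTop ×ˢ 𝓟 {x | |x| < R}) atTop :=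
    tendsto_natCast_atTop_atTop.comp tendsto_fst
  have hshift : Tendsto (fun p : ℕ × ℝ => p.2 / p.1) (atTop ×ˢ 𝓟 {x | |x| < R}) (𝓝 0) := by
    refine squeeze_zero_norm' ?_ (hnat.const_div_atTop R)
    filter_upwards [tendsto_snd.eventually (eventually_mem_principal {x : ℝ | |x| < R})]
      with p hp
    rw [Real.norm_eq_abs, abs_div, Nat.abs_cast]
    exact div_le_div_of_nonneg_right (le_of_lt hp) p.1.cast_nonneg
  simpa using tendsto_fst.prodMk (hshift.add_const θ)

end Bulk

/-- Uniform convergence of the bulk density: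
`lim_{N→∞} sup_{|x|<R} |L^N(x/N+θ, x/N+θ) - √(2-θ²)/π| = 0`. -/
theorem bulk_density_uniform_convergence (θ R : ℝ)
    (hθ1 : -Real.sqrt 2 < θ) (hθ2 : θ < Real.sqrt 2) (hR : 0 < R) :
    ∀ ε : ℝ, 0 < ε → ∃ N0 : ℕ, ∀ N : ℕ, N0 ≤ N → ∀ x : ℝ, |x| < R →
      |kerL N (x / (N : ℝ) + θ) (x / (N : ℝ) + θ) - Real.sqrt (2 - θ ^ 2) / Real.pi| < ε := by
  intro ε hε
  have hlim := (tendsto_kerL_diag (abs_lt.2 ⟨hθ1, hθ2⟩)).comp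
    (tendsto_prodMk_div_natCast_add θ R)
  have hev := Metric.tendsto_nhds.1 hlim ε hε
  rw [eventually_prod_principal_iff, eventually_atTop] at hev
  simpa [Real.dist_eq] using hev
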